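/- Let α ≠ 0, β ≠ 0, a, b be real parameters, let x₂₁, x₂₂ be arbitrary smooth real functions of θ, and work on a domain where sin αθ cos αθ ≠ 0. Define Π̂₁₁ = p_θ² + p_φ²(4 + 3 cos²αθ/sin²αθ), Π̂₁₂ = 2 p_φ p_θ + β (cos αθ/sin³αθ) p_φ², Π̂₂₁ = 2 p_φ p_θ, Π̂₂₂ = p_θ² − p_φ² cos²αθ/sin²αθ; let Λ̂ be the 2×2 matrix Λ̂ = (a e^{−4αφ/β}/sin²αθ)·[[cos²αθ − 4, −β cos αθ/sin αθ],[4 cos αθ sin αθ/β, cos²αθ]] + b (sin²αθ/cos²αθ)·[[1, −β/(sin αθ cos αθ)],[0, 1]]; and set y₁₁ = x₂₁ − β/(2α), y₁₂ = −(cos²αθ/sin²αθ) x₂₂ − cos αθ/(α sin αθ). Define the bivector π′ by {φ,θ}_{π′} = x₂₁ ∂Π̂₂₁/∂p_φ + x₂₂ ∂Π̂₂₂/∂p_φ − y₁₁ ∂Π̂₁₁/∂p_θ − y₁₂ ∂Π̂₁₂/∂p_θ, {q_i,p_j}_{π′} = Π̂_{ij} + Λ̂_{ij} (where (q₁,q₂,p₁,p₂)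 = (φ,θ,p_φ,p_θ)), and {p_φ,p_θ}_{π′} = (1/3)[(∂Π̂₁₁/∂θ − ∂Π̂₁₂/∂φ) p_φ + (∂Π̂₂₁/∂θ − ∂Π̂₂₂/∂φ) p_θ] + (∂Λ̂₁₁/∂θ − ∂Λ̂₁₂/∂φ) p_φ + (∂Λ̂₂₁/∂θ − ∂Λ̂₂₂/∂φ) p_θ. Then π′ is a Poisson bivector compatible with the canonical bivector P. -/

import Mathlib

open Real

/-- Partial derivative in the `i`-th coordinate direction on `ℝ⁴`
(coordinates `z 0 = φ`, `z 1 = θ`, `z 2 = p_φ`, `z 3 = p_θ`). -/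
noncomputable def pd (i : Fin 4) (F : (Fin 4 → ℝ) → ℝ) (z : Fin 4 → ℝ) : ℝ :=
  fderiv ℝ F z (Pi.single i 1)

/-- The Poisson bracket of `F` and `G` defined by a bivector `π`. -/
noncomputable def pbiv (Pv : (Fin 4 → ℝ) → Matrix (Fin 4) (Fin 4) ℝ)
    (F G : (Fin 4 → ℝ) → ℝ) (z : Fin 4 → ℝ) : ℝ :=
  ∑ i : Fin 4, ∑ j : Fin 4, Pv z i j * pd i F z * pd j G z

/-- A bivector `π` satisfies the Jacobi identity (is a Poisson bivector) on `U`. -/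
def IsPoissonOn (Pv : (Fin 4 → ℝ) → Matrix (Fin 4) (Fin 4) ℝ)
    (U : Set (Fin 4 → ℝ)) : Prop :=
  ∀ z ∈ U, ∀ i j k : Fin 4,
    (∑ l : Fin 4, (Pv z l i * pd l (fun w => Pv w j k) z
      + Pv z l j * pd l (fun w => Pv w k i) z
      + Pv z l k * pd l (fun w => Pv w i j) z)) = 0

/-- The antisymmetric matrix with the given upper-triangular entries:
`a = {φ,θ}`, `b = {φ,p_φ}`, `c = {φ,p_θ}`, `d = {θ,p_φ}`, `e = {θ,p_θ}`, `f = {p_φ,p_θ}`. -/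
noncomputable def skew (a b c d e f : ℝ) : Matrix (Fin 4) (Fin 4) ℝ :=
  !![0, a, b, c; -a, 0, d, e; -b, -d, 0, f; -c, -e, -f, 0]

/-- The canonical Poisson bivector: `{φ,p_φ} = {θ,p_θ} = 1`, all other brackets zero. -/
noncomputable def Pcan : Matrix (Fin 4) (Fin 4) ℝ :=
  !![0, 0, 1, 0; 0, 0, 0, 1; -1, 0, 0, 0; 0, -1, 0, 0]

noncomputable def Pih11 (α : ℝ) (z : Fin 4 → ℝ) : ℝ :=
  z 3 ^ 2 + z 2 ^ 2 * (4 + 3 * cos (α * z 1) ^ 2 / sin (α * z 1) ^ 2)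

noncomputable def Pih12 (α β : ℝ) (z : Fin 4 → ℝ) : ℝ :=
  2 * z 2 * z 3 + β * (cos (α * z 1) / sin (α * z 1) ^ 3) * z 2 ^ 2

noncomputable def Pih21 (z : Fin 4 → ℝ) : ℝ := 2 * z 2 * z 3

noncomputable def Pih22 (α : ℝ) (z : Fin 4 → ℝ) : ℝ :=
  z 3 ^ 2 - z 2 ^ 2 * cos (α * z 1) ^ 2 / sin (α * z 1) ^ 2

noncomputable def Lah11 (α β a b : ℝ) (z : Fin 4 → ℝ) : ℝ :=
  a * exp (-(4 * α * z 0) / β) / sin (α * z 1) ^ 2 * (cos (α * z 1) ^ 2 - 4)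
    + b * (sin (α * z 1) ^ 2 / cos (α * z 1) ^ 2)

noncomputable def Lah12 (α β a b : ℝ) (z : Fin 4 → ℝ) : ℝ :=
  a * exp (-(4 * α * z 0) / β) / sin (α * z 1) ^ 2 * (-(β * cos (α * z 1)) / sin (α * z 1))
    + b * (sin (α * z 1) ^ 2 / cos (α * z 1) ^ 2) * (-β / (sin (α * z 1) * cos (α * z 1)))

noncomputable def Lah21 (α β a : ℝ) (z : Fin 4 → ℝ) : ℝ :=
  a * exp (-(4 * α * z 0) / β) / sin (α * z 1) ^ 2 * (4 * cos (α * z 1) * sin (α * z 1) / β)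

noncomputable def Lah22 (α β a b : ℝ) (z : Fin 4 → ℝ) : ℝ :=
  a * exp (-(4 * α * z 0) / β) / sin (α * z 1) ^ 2 * cos (α * z 1) ^ 2
    + b * (sin (α * z 1) ^ 2 / cos (α * z 1) ^ 2)

/-- `y₁₁ = x₂₁ − β/(2α)`. -/
noncomputable def y11 (α β : ℝ) (x21 : ℝ → ℝ) (z : Fin 4 → ℝ) : ℝ :=
  x21 (z 1) - β / (2 * α)

/-- `y₁₂ = −(cos²αθ/sin²αθ) x₂₂ − cos αθ/(α sin αθ)`. -/
noncomputable def y12 (α : ℝ) (x22 : ℝ → ℝ) (z : Fin 4 → ℝ) : ℝ :=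
  -(cos (α * z 1) ^ 2 / sin (α * z 1) ^ 2) * x22 (z 1)
    - cos (α * z 1) / (α * sin (α * z 1))

/-- The natural Poisson bivector `π′` of the Kowalevski–Goryachev–Chaplygin gyrostat:
`{φ,θ} = x₂₁ ∂Π̂₂₁/∂p_φ + x₂₂ ∂Π̂₂₂/∂p_φ − y₁₁ ∂Π̂₁₁/∂p_θ − y₁₂ ∂Π̂₁₂/∂p_θ`,
`{q_i,p_j} = Π̂_{ij} + Λ̂_{ij}`,
`{p_φ,p_θ} = (1/3)[(∂Π̂₁₁/∂θ − ∂Π̂₁₂/∂φ) p_φ + (∂Π̂₂₁/∂θ − ∂Π̂₂₂/∂φ) p_θ]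
  + (∂Λ̂₁₁/∂θ − ∂Λ̂₁₂/∂φ) p_φ + (∂Λ̂₂₁/∂θ − ∂Λ̂₂₂/∂φ) p_θ`. -/
noncomputable def piKGC (α β a b : ℝ) (x21 x22 : ℝ → ℝ) (z : Fin 4 → ℝ) :
    Matrix (Fin 4) (Fin 4) ℝ :=
  skew
    (x21 (z 1) * pd 2 Pih21 z + x22 (z 1) * pd 2 (Pih22 α) z
      - y11 α β x21 z * pd 3 (Pih11 α) z - y12 α x22 z * pd 3 (Pih12 α β) z)
    (Pih11 α z + Lah11 α β a b z)
    (Pih12 α β z + Lah12 α β a b z)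
    (Pih21 z + Lah21 α β a z)
    (Pih22 α z + Lah22 α β a b z)
    ((1 / 3) * ((pd 1 (Pih11 α) z - pd 0 (Pih12 α β) z) * z 2
        + (pd 1 Pih21 z - pd 0 (Pih22 α) z) * z 3)
      + (pd 1 (Lah11 α β a b) z - pd 0 (Lah12 α β a b) z) * z 2
      + (pd 1 (Lah21 α β a) z - pd 0 (Lah22 α β a b) z) * z 3)

open Real Filter Topology

/-- `F` is differentiable at `z` with partial derivatives `d`. -/
def HP (F : (Fin 4 → ℝ) → ℝ) (z : Fin 4 → ℝ) (d : Fin 4 → ℝ) : Prop :=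
  DifferentiableAt ℝ F z ∧ ∀ i, pd i F z = d i

namespace HP

variable {F G : (Fin 4 → ℝ) → ℝ} {z d e : Fin 4 → ℝ}

theorem const (c : ℝ) : HP (fun _ => c) z (fun _ => 0) :=
  ⟨by fun_prop, fun i => by simp [pd]⟩

theorem coord (j : Fin 4) : HP (fun w => w j) z (fun i => if i = j then 1 else 0) := by
  refine ⟨by fun_prop, fun i => ?_⟩
  have h : HasFDerivAt (fun w : Fin 4 → ℝ => w j)
      (ContinuousLinearMap.proj (R := ℝ) (φ := fun _ : Fin 4 => ℝ) j) z := hasFDerivAt_apply j z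
  by_cases hij : i = j
  · subst hij; simp [pd, h.fderiv]
  · simp [pd, h.fderiv, hij, Ne.symm hij]

theorem add (hF : HP F z d) (hG : HP G z e) :
    HP (fun w => F w + G w) z (fun i => d i + e i) := by
  refine ⟨hF.1.add hG.1, fun i => ?_⟩
  simp only [← hF.2, ← hG.2]
  simp [pd, fderiv_fun_add hF.1 hG.1]

theorem sub (hF : HP F z d) (hG : HP G z e) :
    HP (fun w => F w - G w) z (fun i => d i - e i) := by
  refine ⟨hF.1.sub hG.1, fun i => ?_⟩
  simp only [← hF.2, ← hG.2]
  simp [pd, fderiv_fun_sub hF.1 hG.1]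

theorem mul (hF : HP F z d) (hG : HP G z e) :
    HP (fun w => F w * G w) z (fun i => d i * G z + F z * e i) := by
  refine ⟨hF.1.mul hG.1, fun i => ?_⟩
  simp only [← hF.2, ← hG.2]
  simp [pd, fderiv_fun_mul hF.1 hG.1]
  ring

theorem comp {f : ℝ → ℝ} {f' : ℝ} (hF : HP F z d) (hf : HasDerivAt f f' (F z)) :
    HP (fun w => f (F w)) z (fun i => f' * d i) := by
  have h : HasFDerivAt (fun w => f (F w)) (f' • fderiv ℝ F z) z :=
    hf.comp_hasFDerivAt z hF.1.hasFDerivAt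
  refine ⟨h.differentiableAt, fun i => ?_⟩
  simp only [← hF.2]
  simp [pd, h.fderiv]

theorem pow (n : ℕ) (hF : HP F z d) :
    HP (fun w => F w ^ n) z (fun i => (n : ℝ) * F z ^ (n - 1) * d i) :=
  hF.comp (hasDerivAt_pow n (F z))

theorem neg (hF : HP F z d) : HP (fun w => - F w) z (fun i => - d i) := by
  refine ⟨hF.1.neg, fun i => ?_⟩
  simp only [← hF.2]
  simp [pd, fderiv_fun_neg]

theorem congr (hF : HP F z d) (h : G =ᶠ[𝓝 z] F) : HP G z d :=
  ⟨hF.1.congr_of_eventuallyEq h, fun i => by rw [← hF.2]; simp [pd, h.fderiv_eq]⟩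

end HP

noncomputable def kk (α : ℝ) (z : Fin 4 → ℝ) : ℝ := cos (α * z 1) / sin (α * z 1)
noncomputable def mm (α : ℝ) (z : Fin 4 → ℝ) : ℝ := sin (α * z 1) / cos (α * z 1)
noncomputable def EE (α β : ℝ) (z : Fin 4 → ℝ) : ℝ := exp (-(4 * α * z 0) / β)

theorem hp_kk (α : ℝ) (z : Fin 4 → ℝ) (hs : sin (α * z 1) ≠ 0) :
    HP (kk α) z (fun i => if i = 1 then -α * (1 + kk α z ^ 2) else 0) := by
  have hf : HasDerivAt (fun t : ℝ => cos (α * t) / sin (α * t))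
      (-α * (1 + kk α z ^ 2)) (z 1) := by
    have h1 : HasDerivAt (fun t : ℝ => α * t) α (z 1) := by
      simpa using (hasDerivAt_id (z 1)).const_mul α
    refine (h1.cos.fun_div h1.sin hs).congr_deriv ?_
    unfold kk
    field_simp
    ring
  refine ⟨((HP.coord 1).comp hf).1, fun i => (((HP.coord 1).comp hf).2 i).trans ?_⟩
  dsimp only
  split_ifs <;> simp

theorem hp_mm (α : ℝ) (z : Fin 4 → ℝ) (hc : cos (α * z 1) ≠ 0) :
    HP (mm α) z (fun i => if i = 1 then α * (1 + mm α z ^ 2) else 0) := by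
  have hf : HasDerivAt (fun t : ℝ => sin (α * t) / cos (α * t))
      (α * (1 + mm α z ^ 2)) (z 1) := by
    have h1 : HasDerivAt (fun t : ℝ => α * t) α (z 1) := by
      simpa using (hasDerivAt_id (z 1)).const_mul α
    refine (h1.sin.fun_div h1.cos hc).congr_deriv ?_
    unfold mm
    field_simp
    ring
  refine ⟨((HP.coord 1).comp hf).1, fun i => (((HP.coord 1).comp hf).2 i).trans ?_⟩
  dsimp only
  split_ifs <;> simp

theorem hp_EE (α β : ℝ) (z : Fin 4 → ℝ) :
    HP (EE α β) z (fun i => if i = 0 then -(4 * α / β) * EE α β z else 0) := by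
  have hf : HasDerivAt (fun t : ℝ => exp (-(4 * α * t) / β))
      (-(4 * α / β) * EE α β z) (z 0) := by
    have h1 : HasDerivAt (fun t : ℝ => -(4 * α * t) / β) (-(4 * α / β)) (z 0) := by
      refine ((((hasDerivAt_id (z 0)).const_mul (4 * α)).neg).div_const β).congr_deriv ?_
      ring
    refine h1.exp.congr_deriv ?_
    unfold EE
    ring
  refine ⟨((HP.coord 0).comp hf).1, fun i => (((HP.coord 0).comp hf).2 i).trans ?_⟩
  dsimp only
  split_ifs <;> simp

/-- The regular domain. -/
def Dom (α : ℝ) : Set (Fin 4 → ℝ) := {z | sin (α * z 1) * cos (α * z 1) ≠ 0}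

theorem isOpen_Dom (α : ℝ) : IsOpen (Dom α) :=
  isOpen_ne_fun (by fun_prop) (by fun_prop)

section forms
variable {α β a b : ℝ} {z : Fin 4 → ℝ}

theorem Pih11_eq (hz : z ∈ Dom α) :
    Pih11 α z = z 3 ^ 2 + z 2 ^ 2 * (4 + 3 * kk α z ^ 2) := by
  unfold Pih11 kk; ring

theorem Pih12_eq (hz : z ∈ Dom α) :
    Pih12 α β z = 2 * z 2 * z 3 + β * (kk α z * (1 + kk α z ^ 2)) * z 2 ^ 2 := by
  have hs := left_ne_zero_of_mul hz
  have h := sin_sq_add_cos_sq (α * z 1)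
  have : kk α z * (1 + kk α z ^ 2) = cos (α * z 1) / sin (α * z 1) ^ 3 := by
    unfold kk; field_simp; rw [h, mul_one]
  rw [this, Pih12]

theorem Pih22_eq (hz : z ∈ Dom α) :
    Pih22 α z = z 3 ^ 2 - z 2 ^ 2 * kk α z ^ 2 := by
  unfold Pih22 kk; ring

theorem Lah11_eq (hz : z ∈ Dom α) :
    Lah11 α β a b z = -(a * EE α β z * (4 + 3 * kk α z ^ 2)) + b * mm α z ^ 2 := by
  have hs := left_ne_zero_of_mul hz
  have hc := right_ne_zero_of_mul hz
  have h := sin_sq_add_cos_sq (α * z 1)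
  unfold Lah11 kk mm EE
  field_simp
  linear_combination (4 * a * rexp (-(4 * α * z 0 / β)) * cos (α * z 1) ^ 2) * h

theorem Lah12_eq (hz : z ∈ Dom α) :
    Lah12 α β a b z = -(a * EE α β z * β * (kk α z * (1 + kk α z ^ 2)))
      - b * β * (mm α z * (1 + mm α z ^ 2)) := by
  have hs := left_ne_zero_of_mul hz
  have hc := right_ne_zero_of_mul hz
  have h := sin_sq_add_cos_sq (α * z 1)
  have h1 : kk α z * (1 + kk α z ^ 2) = cos (α * z 1) / sin (α * z 1) ^ 3 := by
    unfold kk; field_simp; rw [h]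
  have h2 : mm α z * (1 + mm α z ^ 2) = sin (α * z 1) / cos (α * z 1) ^ 3 := by
    unfold mm; field_simp; rw [add_comm, h]
  rw [h1, h2]
  unfold Lah12 EE
  field_simp
  ring

theorem Lah21_eq (hz : z ∈ Dom α) :
    Lah21 α β a z = 4 * a / β * EE α β z * kk α z := by
  have hs := left_ne_zero_of_mul hz
  unfold Lah21 kk EE
  by_cases hβ : β = 0
  · simp [hβ]
  field_simp

theorem Lah22_eq (hz : z ∈ Dom α) :
    Lah22 α β a b z = a * EE α β z * kk α z ^ 2 + b * mm α z ^ 2 := by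
  unfold Lah22 kk mm EE
  ring

end forms

noncomputable def fA (α β : ℝ) (z : Fin 4 → ℝ) : ℝ :=
  β / α * z 3 + 2 / α * kk α z * z 2
noncomputable def fB (α β a b l : ℝ) (z : Fin 4 → ℝ) : ℝ :=
  z 3 ^ 2 + (z 2 ^ 2 - a * EE α β z) * (4 + 3 * kk α z ^ 2) + b * mm α z ^ 2 + l
noncomputable def fC (α β a b : ℝ) (z : Fin 4 → ℝ) : ℝ :=
  2 * z 2 * z 3 + β * (z 2 ^ 2 - a * EE α β z) * (kk α z + kk α z ^ 3)
    - b * β * (mm α z + mm α z ^ 3)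
noncomputable def fD (α β a : ℝ) (z : Fin 4 → ℝ) : ℝ :=
  2 * z 2 * z 3 + 4 * a / β * EE α β z * kk α z
noncomputable def fG (α β a b l : ℝ) (z : Fin 4 → ℝ) : ℝ :=
  z 3 ^ 2 - (z 2 ^ 2 - a * EE α β z) * kk α z ^ 2 + b * mm α z ^ 2 + l
noncomputable def fF (α β a b : ℝ) (z : Fin 4 → ℝ) : ℝ :=
  2 * α * (a * EE α β z - z 2 ^ 2) * (kk α z + kk α z ^ 3) * z 2
    + 2 * α * b * (mm α z + mm α z ^ 3) * z 2 - 4 * α * a / β * EE α β z * z 3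

noncomputable def clo (α β a b l : ℝ) (z : Fin 4 → ℝ) : Matrix (Fin 4) (Fin 4) ℝ :=
  skew (fA α β z) (fB α β a b l z) (fC α β a b z) (fD α β a z) (fG α β a b l z) (fF α β a b z)

theorem skew_congr {a b c d e f a' b' c' d' e' f' : ℝ} (h1 : a = a') (h2 : b = b') (h3 : c = c')
    (h4 : d = d') (h5 : e = e') (h6 : f = f') : skew a b c d e f = skew a' b' c' d' e' f' := by
  subst h1 h2 h3 h4 h5 h6; rfl

theorem pi_eq {α β a b : ℝ} (hα : α ≠ 0) (hβ : β ≠ 0) (x21 x22 : ℝ → ℝ) {z : Fin 4 → ℝ}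
    (hz : z ∈ Dom α) : piKGC α β a b x21 x22 z = clo α β a b 0 z := by
  have hs := left_ne_zero_of_mul hz
  have hc := right_ne_zero_of_mul hz
  have hU : ∀ᶠ w in 𝓝 z, w ∈ Dom α := (isOpen_Dom α).mem_nhds hz
  have hk := hp_kk α z hs
  have hm := hp_mm α z hc
  have hE := hp_EE α β z
  have a11 : HP (Pih11 α) z _ := HP.congr (by
    repeat' (with_reducible
      first | exact hk | exact hm | exact hE | apply HP.const | apply HP.coord
            | apply HP.add | apply HP.sub | apply HP.mul | apply HP.neg | apply HP.pow))
    (hU.mono fun w hw => Pih11_eq hw)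
  have a12 : HP (Pih12 α β) z _ := HP.congr (by
    repeat' (with_reducible
      first | exact hk | exact hm | exact hE | apply HP.const | apply HP.coord
            | apply HP.add | apply HP.sub | apply HP.mul | apply HP.neg | apply HP.pow))
    (hU.mono fun w hw => Pih12_eq hw)
  have a22 : HP (Pih22 α) z _ := HP.congr (by
    repeat' (with_reducible
      first | exact hk | exact hm | exact hE | apply HP.const | apply HP.coord
            | apply HP.add | apply HP.sub | apply HP.mul | apply HP.neg | apply HP.pow))
    (hU.mono fun w hw => Pih22_eq hw)
  have a21 : HP (fun w => 2 * w 2 * w 3) z _ := (by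
    repeat' (with_reducible
      first | exact hk | exact hm | exact hE | apply HP.const | apply HP.coord
            | apply HP.add | apply HP.sub | apply HP.mul | apply HP.neg | apply HP.pow))
  change HP Pih21 z _ at a21
  have l11 : HP (Lah11 α β a b) z _ := HP.congr (by
    repeat' (with_reducible
      first | exact hk | exact hm | exact hE | apply HP.const | apply HP.coord
            | apply HP.add | apply HP.sub | apply HP.mul | apply HP.neg | apply HP.pow))
    (hU.mono fun w hw => Lah11_eq hw)
  have l12 : HP (Lah12 α β a b) z _ := HP.congr (by
    repeat' (with_reducible
      first | exact hk | exact hm | exact hE | apply HP.const | apply HP.coord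
            | apply HP.add | apply HP.sub | apply HP.mul | apply HP.neg | apply HP.pow))
    (hU.mono fun w hw => Lah12_eq hw)
  have l21 : HP (Lah21 α β a) z _ := HP.congr (by
    repeat' (with_reducible
      first | exact hk | exact hm | exact hE | apply HP.const | apply HP.coord
            | apply HP.add | apply HP.sub | apply HP.mul | apply HP.neg | apply HP.pow))
    (hU.mono fun w hw => Lah21_eq hw)
  have l22 : HP (Lah22 α β a b) z _ := HP.congr (by
    repeat' (with_reducible
      first | exact hk | exact hm | exact hE | apply HP.const | apply HP.coord
            | apply HP.add | apply HP.sub | apply HP.mul | apply HP.neg | apply HP.pow))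
    (hU.mono fun w hw => Lah22_eq hw)
  have hy : cos (α * z 1) / (α * sin (α * z 1)) = kk α z / α := by unfold kk; field_simp
  have hy' : cos (α * z 1) ^ 2 / sin (α * z 1) ^ 2 = kk α z ^ 2 := by unfold kk; ring
  unfold piKGC clo
  rw [a21.2 2, a22.2 2, a11.2 3, a12.2 3, a11.2 1, a12.2 0, a21.2 1, a22.2 0, l11.2 1, l12.2 0,
    l21.2 1, l22.2 0, Pih11_eq hz, Pih12_eq hz, Pih22_eq hz, Lah11_eq hz, Lah12_eq hz,
    Lah21_eq hz, Lah22_eq hz, y11, y12, hy, hy', Pih21]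
  simp only [Fin.reduceEq, if_true, if_false]
  refine skew_congr ?_ ?_ ?_ ?_ ?_ ?_
  · unfold fA; field_simp; ring
  · unfold fB; ring
  · unfold fC; ring
  · unfold fD; ring
  · unfold fG; ring
  · unfold fF; norm_num; field_simp; ring

theorem Pcan_add (α β a b : ℝ) (z : Fin 4 → ℝ) :
    Pcan + clo α β a b 0 z = clo α β a b 1 z := by
  ext i j
  fin_cases i <;> fin_cases j <;>
    simp [Pcan, clo, skew, fB, fG] <;> ring

/-- Reduction of the Jacobi identity to four index triples. -/
theorem jac_red (M : Fin 4 → Fin 4 → ℝ) (D : Fin 4 → Fin 4 → Fin 4 → ℝ)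
    (hM : ∀ i j, M i j = - M j i) (hD : ∀ l i j, D l i j = - D l j i)
    (h1 : ∑ l, (M l 0 * D l 1 2 + M l 1 * D l 2 0 + M l 2 * D l 0 1) = 0)
    (h2 : ∑ l, (M l 0 * D l 1 3 + M l 1 * D l 3 0 + M l 3 * D l 0 1) = 0)
    (h3 : ∑ l, (M l 0 * D l 2 3 + M l 2 * D l 3 0 + M l 3 * D l 0 2) = 0)
    (h4 : ∑ l, (M l 1 * D l 2 3 + M l 2 * D l 3 1 + M l 3 * D l 1 2) = 0)
    (i j k : Fin 4) :
    ∑ l, (M l i * D l j k + M l j * D l k i + M l k * D l i j) = 0 := by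
  set J : Fin 4 → Fin 4 → Fin 4 → ℝ := fun i j k =>
    ∑ l, (M l i * D l j k + M l j * D l k i + M l k * D l i j) with hJ
  have c1 : ∀ i j k, J i j k = J j k i := fun i j k => by
    simp only [hJ]; exact Finset.sum_congr rfl fun l _ => by ring
  have c2 : ∀ i j k, J i j k = - J j i k := fun i j k => by
    simp only [hJ, ← Finset.sum_neg_distrib]
    exact Finset.sum_congr rfl fun l _ => by
      rw [hD l j k, hD l k i, hD l i j]; ring
  have c3 : ∀ i k, J i i k = 0 := fun i k => by linarith [c2 i i k]
  have c4 : ∀ i k, J i k i = 0 := fun i k => by rw [← c1]; exact c3 i k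
  have c5 : ∀ i k, J k i i = 0 := fun i k => by rw [c1]; exact c3 i k
  have g1 : J 0 1 2 = 0 := h1
  have g2 : J 0 1 3 = 0 := h2
  have g3 : J 0 2 3 = 0 := h3
  have g4 : J 1 2 3 = 0 := h4
  have key : ∀ i j k, J i j k = 0 → J j k i = 0 ∧ J k i j = 0 ∧ J j i k = 0 ∧ J i k j = 0 ∧
      J k j i = 0 := fun i j k h => by
    have e1 : J j k i = 0 := by rw [← c1]; exact h
    have e2 : J k i j = 0 := by rw [c1]; exact h
    exact ⟨e1, e2, by rw [c2, h, neg_zero], by rw [c2, e2, neg_zero], by rw [c2, e1, neg_zero]⟩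
  obtain ⟨p1, p2, p3, p4, p5⟩ := key _ _ _ g1
  obtain ⟨q1, q2, q3, q4, q5⟩ := key _ _ _ g2
  obtain ⟨r1, r2, r3, r4, r5⟩ := key _ _ _ g3
  obtain ⟨t1, t2, t3, t4, t5⟩ := key _ _ _ g4
  change J i j k = 0
  clear_value J
  clear h1 h2 h3 h4 hJ hM hD key c1 c2
  fin_cases i <;> fin_cases j <;> fin_cases k <;>
    first | exact c3 _ _ | exact c4 _ _ | exact c5 _ _ | assumption

theorem clo_poisson {α β : ℝ} (a b l : ℝ) (hα : α ≠ 0) (hβ : β ≠ 0) {z : Fin 4 → ℝ}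
    (hz : z ∈ Dom α) (i j k : Fin 4) :
    (∑ m : Fin 4, (clo α β a b l z m i * pd m (fun w => clo α β a b l w j k) z
      + clo α β a b l z m j * pd m (fun w => clo α β a b l w k i) z
      + clo α β a b l z m k * pd m (fun w => clo α β a b l w i j) z)) = 0 := by
  have hs := left_ne_zero_of_mul hz
  have hc := right_ne_zero_of_mul hz
  have hk := hp_kk α z hs
  have hm := hp_mm α z hc
  have hE := hp_EE α β z
  have hkm : kk α z * mm α z = 1 := by unfold kk mm; field_simp
  have hk0 : kk α z ≠ 0 := left_ne_zero_of_mul_eq_one hkm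
  have hmk : mm α z = (kk α z)⁻¹ := eq_inv_of_mul_eq_one_right hkm
  have hanti : ∀ w i j, clo α β a b l w i j = - clo α β a b l w j i := fun w i j => by
    fin_cases i <;> fin_cases j <;> simp [clo, skew]
  have pA : HP (fun w => β / α * w 3 + 2 / α * kk α w * w 2) z _ := (by
    repeat' (with_reducible
      first | exact hk | exact hm | exact hE | apply HP.const | apply HP.coord
            | apply HP.add | apply HP.sub | apply HP.mul | apply HP.neg | apply HP.pow))
  change HP (fA α β) z _ at pA
  have pB : HP (fun w => w 3 ^ 2 + (w 2 ^ 2 - a * EE α β w) * (4 + 3 * kk α w ^ 2) + b * mm α w ^ 2 + l) z _ := (by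
    repeat' (with_reducible
      first | exact hk | exact hm | exact hE | apply HP.const | apply HP.coord
            | apply HP.add | apply HP.sub | apply HP.mul | apply HP.neg | apply HP.pow))
  change HP (fB α β a b l) z _ at pB
  have pC : HP (fun w => 2 * w 2 * w 3 + β * (w 2 ^ 2 - a * EE α β w) * (kk α w + kk α w ^ 3)
    - b * β * (mm α w + mm α w ^ 3)) z _ := (by
    repeat' (with_reducible
      first | exact hk | exact hm | exact hE | apply HP.const | apply HP.coord
            | apply HP.add | apply HP.sub | apply HP.mul | apply HP.neg | apply HP.pow))
  change HP (fC α β a b) z _ at pC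
  have pD : HP (fun w => 2 * w 2 * w 3 + 4 * a / β * EE α β w * kk α w) z _ := (by
    repeat' (with_reducible
      first | exact hk | exact hm | exact hE | apply HP.const | apply HP.coord
            | apply HP.add | apply HP.sub | apply HP.mul | apply HP.neg | apply HP.pow))
  change HP (fD α β a) z _ at pD
  have pG : HP (fun w => w 3 ^ 2 - (w 2 ^ 2 - a * EE α β w) * kk α w ^ 2 + b * mm α w ^ 2 + l) z _ := (by
    repeat' (with_reducible
      first | exact hk | exact hm | exact hE | apply HP.const | apply HP.coord
            | apply HP.add | apply HP.sub | apply HP.mul | apply HP.neg | apply HP.pow))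
  change HP (fG α β a b l) z _ at pG
  have pF : HP (fun w => 2 * α * (a * EE α β w - w 2 ^ 2) * (kk α w + kk α w ^ 3) * w 2
    + 2 * α * b * (mm α w + mm α w ^ 3) * w 2 - 4 * α * a / β * EE α β w * w 3) z _ := (by
    repeat' (with_reducible
      first | exact hk | exact hm | exact hE | apply HP.const | apply HP.coord
            | apply HP.add | apply HP.sub | apply HP.mul | apply HP.neg | apply HP.pow))
  change HP (fF α β a b) z _ at pF
  have d01 : (fun w => clo α β a b l w 0 1) = fA α β := by
    funext w; simp [clo, skew]
  have d10 : (fun w => clo α β a b l w 1 0) = fun w => - fA α β w := by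
    funext w; simp [clo, skew]
  have d02 : (fun w => clo α β a b l w 0 2) = fB α β a b l := by
    funext w; simp [clo, skew]
  have d20 : (fun w => clo α β a b l w 2 0) = fun w => - fB α β a b l w := by
    funext w; simp [clo, skew]
  have d03 : (fun w => clo α β a b l w 0 3) = fC α β a b := by
    funext w; simp [clo, skew]
  have d30 : (fun w => clo α β a b l w 3 0) = fun w => - fC α β a b w := by
    funext w; simp [clo, skew]
  have d12 : (fun w => clo α β a b l w 1 2) = fD α β a := by
    funext w; simp [clo, skew]
  have d21 : (fun w => clo α β a b l w 2 1) = fun w => - fD α β a w := by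
    funext w; simp [clo, skew]
  have d13 : (fun w => clo α β a b l w 1 3) = fG α β a b l := by
    funext w; simp [clo, skew]
  have d31 : (fun w => clo α β a b l w 3 1) = fun w => - fG α β a b l w := by
    funext w; simp [clo, skew]
  have d23 : (fun w => clo α β a b l w 2 3) = fF α β a b := by
    funext w; simp [clo, skew]
  have d32 : (fun w => clo α β a b l w 3 2) = fun w => - fF α β a b w := by
    funext w; simp [clo, skew]
  have v : clo α β a b l z = skew (fA α β z) (fB α β a b l z) (fC α β a b z) (fD α β a z)
    (fG α β a b l z) (fF α β a b z) := rfl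
  refine jac_red (clo α β a b l z) (fun m i j => pd m (fun w => clo α β a b l w i j) z)
    (hanti z) (fun m i j => ?_) ?_ ?_ ?_ ?_ i j k
  · have : (fun w => clo α β a b l w i j) = fun w => - clo α β a b l w j i :=
      funext fun w => hanti w i j
    simp only [this, pd, fderiv_fun_neg]
    simp
  · simp only [d01, d02, d03, d12, d13, d23, d10, d20, d30, d21, d31, d32, Fin.sum_univ_four,
      pA.2, pB.2, pC.2, pD.2, pG.2, pF.2, pA.neg.2, pB.neg.2, pC.neg.2, pD.neg.2, pG.neg.2,
      pF.neg.2, Fin.reduceEq, if_true, if_false]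
    rw [v]
    simp only [skew, Matrix.of_apply, Matrix.cons_val', Matrix.cons_val, Matrix.cons_val_zero,
      Matrix.cons_val_one]
    simp only [fA, fB, fC, fD, fG, fF, hmk]
    generalize kk α z = K at *
    generalize EE α β z = E at *
    norm_num
    field_simp
    ring
  · simp only [d01, d02, d03, d12, d13, d23, d10, d20, d30, d21, d31, d32, Fin.sum_univ_four,
      pA.2, pB.2, pC.2, pD.2, pG.2, pF.2, pA.neg.2, pB.neg.2, pC.neg.2, pD.neg.2, pG.neg.2,
      pF.neg.2, Fin.reduceEq, if_true, if_false]
    rw [v]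
    simp only [skew, Matrix.of_apply, Matrix.cons_val', Matrix.cons_val, Matrix.cons_val_zero,
      Matrix.cons_val_one]
    simp only [fA, fB, fC, fD, fG, fF, hmk]
    generalize kk α z = K at *
    generalize EE α β z = E at *
    norm_num
    field_simp
    ring
  · simp only [d01, d02, d03, d12, d13, d23, d10, d20, d30, d21, d31, d32, Fin.sum_univ_four,
      pA.2, pB.2, pC.2, pD.2, pG.2, pF.2, pA.neg.2, pB.neg.2, pC.neg.2, pD.neg.2, pG.neg.2,
      pF.neg.2, Fin.reduceEq, if_true, if_false]
    rw [v]
    simp only [skew, Matrix.of_apply, Matrix.cons_val', Matrix.cons_val, Matrix.cons_val_zero,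
      Matrix.cons_val_one]
    simp only [fA, fB, fC, fD, fG, fF, hmk]
    generalize kk α z = K at *
    generalize EE α β z = E at *
    norm_num
    field_simp
    ring
  · simp only [d01, d02, d03, d12, d13, d23, d10, d20, d30, d21, d31, d32, Fin.sum_univ_four,
      pA.2, pB.2, pC.2, pD.2, pG.2, pF.2, pA.neg.2, pB.neg.2, pC.neg.2, pD.neg.2, pG.neg.2,
      pF.neg.2, Fin.reduceEq, if_true, if_false]
    rw [v]
    simp only [skew, Matrix.of_apply, Matrix.cons_val', Matrix.cons_val, Matrix.cons_val_zero,
      Matrix.cons_val_one]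
    simp only [fA, fB, fC, fD, fG, fF, hmk]
    generalize kk α z = K at *
    generalize EE α β z = E at *
    norm_num
    field_simp
    ring

theorem statement17 (α β a b : ℝ) (hα : α ≠ 0) (hβ : β ≠ 0) (x21 x22 : ℝ → ℝ)
    (hx21 : ContDiff ℝ (⊤ : ℕ∞) x21) (hx22 : ContDiff ℝ (⊤ : ℕ∞) x22) :
    IsPoissonOn (piKGC α β a b x21 x22) {z | sin (α * z 1) * cos (α * z 1) ≠ 0} ∧
    IsPoissonOn (fun z => Pcan + piKGC α β a b x21 x22 z)
      {z | sin (α * z 1) * cos (α * z 1) ≠ 0} := by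
  have hopen := isOpen_Dom α
  refine ⟨fun z hz i j k => ?_, fun z hz i j k => ?_⟩
  · have hU : ∀ᶠ w in 𝓝 z, w ∈ Dom α := hopen.mem_nhds hz
    have e : ∀ i j l, pd l (fun w => piKGC α β a b x21 x22 w i j) z =
        pd l (fun w => clo α β a b 0 w i j) z := fun i j l => by
      have : (fun w => piKGC α β a b x21 x22 w i j) =ᶠ[𝓝 z] fun w => clo α β a b 0 w i j :=
        hU.mono fun w hw => by simp only [pi_eq hα hβ x21 x22 hw]
      simp only [pd, this.fderiv_eq]
    simp only [e, pi_eq hα hβ x21 x22 hz]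
    exact clo_poisson a b 0 hα hβ hz i j k
  · have hU : ∀ᶠ w in 𝓝 z, w ∈ Dom α := hopen.mem_nhds hz
    have e : ∀ i j l, pd l (fun w => (Pcan + piKGC α β a b x21 x22 w) i j) z =
        pd l (fun w => clo α β a b 1 w i j) z := fun i j l => by
      have : (fun w => (Pcan + piKGC α β a b x21 x22 w) i j) =ᶠ[𝓝 z]
          fun w => clo α β a b 1 w i j :=
        hU.mono fun w hw => by simp only [pi_eq hα hβ x21 x22 hw, Pcan_add]
      simp only [pd, this.fderiv_eq]
    simp only [e, pi_eq hα hβ x21 x22 hz, Pcan_add]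
    exact clo_poisson a b 1 hα hβ hz i j k
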